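/- If i ≠ j, then N_i = (p^(p^(i+1)) - 1)/(p^(p^i) - 1) and N_j = (p^(p^(j+1)) - 1)/(p^(p^j) - 1) are relatively prime. -/

import Mathlib

/-- Modulo the geometric sum of length `n` and ratio `x`, every power of `x ^ n` is `1`. -/
theorem pow_pow_modEq_one_geomSum (x n m : ℕ) :
    (x ^ n) ^ m ≡ 1 [MOD ∑ k ∈ Finset.range n, x ^ k] := by
  have h : x ^ n ≡ 1 [MOD ∑ k ∈ Finset.range n, x ^ k] := by
    refine (Nat.modEq_iff_dvd.2 ⟨(x : ℤ) - 1, ?_⟩).symm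
    push_cast
    exact (geom_sum_mul (x : ℤ) n).symm
  simpa using h.pow m

theorem geomSum_coprime_of_dvd (p x n : ℕ) (hn : n ≠ 0) (hx : p ∣ x) :
    (∑ k ∈ Finset.range n, x ^ k).Coprime p := by
  obtain ⟨m, rfl⟩ := Nat.exists_eq_succ_of_ne_zero hn
  obtain ⟨c, hc⟩ : p ∣ ∑ k ∈ Finset.range m, x ^ (k + 1) :=
    Finset.dvd_sum fun k _ => hx.trans (dvd_pow_self x k.succ_ne_zero)
  rw [Finset.sum_range_succ', hc]
  simp

/-- If `y ≡ 1` modulo `N`, a geometric sum with ratio `y` is congruent to its length. -/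
theorem geomSum_modEq_of_modEq_one {N y : ℕ} (h : y ≡ 1 [MOD N]) (n : ℕ) :
    ∑ k ∈ Finset.range n, y ^ k ≡ n [MOD N] := by
  induction n with
  | zero => rfl
  | succ n ih =>
    rw [Finset.sum_range_succ]
    exact ih.add (by simpa using h.pow n)

theorem geomSum_coprime_of_lt (p : ℕ) (hp : p ≠ 0) {i j : ℕ} (hij : i < j) :
    Nat.Coprime (∑ k ∈ Finset.range p, (p ^ p ^ i) ^ k)
      (∑ k ∈ Finset.range p, (p ^ p ^ j) ^ k) := by
  obtain ⟨d, rfl⟩ := Nat.exists_eq_add_of_lt hij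
  have hpow : p ^ p ^ (i + d + 1) = ((p ^ p ^ i) ^ p) ^ p ^ d := by
    rw [← pow_mul, ← pow_mul]
    congr 1
    ring
  have hmod := geomSum_modEq_of_modEq_one
    (hpow ▸ pow_pow_modEq_one_geomSum (p ^ p ^ i) p (p ^ d)) p
  have hcop := geomSum_coprime_of_dvd p (p ^ p ^ i) p hp (dvd_pow_self p (pow_ne_zero i hp))
  exact Nat.Coprime.symm (hmod.gcd_eq.trans hcop.symm)

theorem N_pairwise_coprime (p : ℕ) (hp : p.Prime) (i j : ℕ) (hij : i ≠ j) :
    Nat.Coprime (∑ k ∈ Finset.range p, (p ^ p ^ i) ^ k)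
      (∑ k ∈ Finset.range p, (p ^ p ^ j) ^ k) := by
  rcases hij.lt_or_gt with h | h
  · exact geomSum_coprime_of_lt p hp.ne_zero h
  · exact (geomSum_coprime_of_lt p hp.ne_zero h).symm
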